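/- Let n ≥ 1 and let a : ℝⁿ × ℝⁿ → ℂ be a continuous bounded function that is ℤⁿ-periodic in its first variable. Suppose the pseudo-differential operator T f(x) = ∫_{ℝⁿ} e^{2πi x·ξ} a(x,ξ) (𝓕_{ℝⁿ} f)(ξ) dξ is bounded on L²(ℝⁿ), i.e., there exists C ≥ 0 with ‖T f‖_{L²(ℝⁿ)} ≤ C ‖f‖_{L²(ℝⁿ)} for every Schwartz function f on ℝⁿ. Then the discrete pseudo-differential operator t_m with symbol m(k,ξ) := conj(a(ξ, −k)) (for k ∈ ℤⁿ, ξ ∈ ℝⁿ), defined by t_m f(k) = ∫_{[0,1]ⁿ} e^{2πi k·ξ} m(k,ξ) (𝓕 f)(ξ) dξ for finitely supported f : ℤⁿ → ℂ, is bounded on ℓ²(ℤⁿ): there exists C' ≥ 0 such that ‖t_m f‖_{ℓ²(ℤⁿ)} ≤ C' ‖f‖_{ℓ²(ℤⁿ)} for every finitely supported f. -/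

import Mathlib

/-!
The discrete operator `t_m` has the matrix `(k, j) ↦ conj â(j - k)`, where `â(l)` denotes
`∫ e^{2πi l·x} a(x, -k) dx` (`fourierEntry`). Its conjugate transpose is, through Fourier series,
the periodic operator sending `∑ₖ c(k) e^{2πi k·x}` to `∑ₖ c(k) e^{2πi k·x} a(x, k)` on the torus.
By duality (`sum_norm_sq_le_of_adjoint`) and Parseval it suffices to bound the latter on `L²` of the
unit cube, and this holds with the constant `C` of the Euclidean operator `T`
(`lintegral_shiftedSum_zero_le`).

The transference from `ℝⁿ` to the torus tests `T` on the Schwartz function `f` with Fourier transform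
`∑ₖ c(k) φ(ξ - k)`, where `φ` is a bump function supported in a small cube about `0`. By Plancherel
and disjointness of supports, `‖f‖² = (∑ₖ |c(k)|²) ∫ φ²` (`exists_schwartz_fourier`,
`lintegral_bump_sum`). Since `a` is periodic in `x`, the numbers `T f(x + l)`, `l ∈ ℤⁿ`, are the
Fourier coefficients of `η ↦ e^{2πi x·η} φ(η) A(x, η)` with
`A(x, η) = ∑ₖ c(k) e^{2πi k·x} a(x, η + k)` (`pdo_add_int`, `shiftedSum`). Parseval in `η` and
integration over `x` in the unit cube give
`∫∫ φ(η)² |A(x, η)|² dη dx = ‖T f‖² ≤ C² (∑ₖ |c(k)|²) ∫ φ²`. Letting `φ²` concentrate at `0` and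
using the continuity of `A`, one obtains `∫ |A(x, 0)|² dx ≤ C² ∑ₖ |c(k)|²`.
-/

open MeasureTheory Real Complex ENNReal NNReal

/-- The Euclidean pseudo-differential operator
`T f (x) = ∫_{ℝⁿ} e^{2πi x·ξ} a(x,ξ) (𝓕_{ℝⁿ} f)(ξ) dξ`, where
`(𝓕_{ℝⁿ} f)(ξ) = ∫_{ℝⁿ} e^{-2πi y·ξ} f(y) dy`. -/
noncomputable def pdo (n : ℕ) (a : (Fin n → ℝ) × (Fin n → ℝ) → ℂ)
    (f : (Fin n → ℝ) → ℂ) : (Fin n → ℝ) → ℂ :=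
  fun x => ∫ ξ : Fin n → ℝ,
    Complex.exp (2 * π * Complex.I * (∑ i, x i * ξ i)) * a (x, ξ) *
      ∫ y : Fin n → ℝ, Complex.exp (-(2 * π * Complex.I * (∑ i, y i * ξ i))) * f y

/-- The discrete pseudo-differential operator on `ℤⁿ` with symbol `m`:
`t_m f (k) = ∫_{[0,1]ⁿ} e^{2πi k·ξ} m(k,ξ) (𝓕 f)(ξ) dξ`, where
`(𝓕 f)(ξ) = Σ_{j ∈ ℤⁿ} e^{-2πi j·ξ} f(j)`. -/
noncomputable def discretePdo (n : ℕ) (m : (Fin n → ℤ) → (Fin n → ℝ) → ℂ)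
    (f : (Fin n → ℤ) → ℂ) : (Fin n → ℤ) → ℂ :=
  fun k => ∫ ξ in Set.Icc (0 : Fin n → ℝ) 1,
    Complex.exp (2 * π * Complex.I * (∑ i, (k i : ℝ) * ξ i)) * m k ξ *
      ∑' j : Fin n → ℤ, Complex.exp (-(2 * π * Complex.I * (∑ i, (j i : ℝ) * ξ i))) * f j

/-- The `ℓ²(ℤⁿ)` norm `(Σ_k |f k|²)^{1/2}`. -/
noncomputable def l2Norm {α : Type*} {E : Type*} [NormedAddCommGroup E] (f : α → E) : ℝ≥0∞ :=
  (∑' k, (‖f k‖₊ : ℝ≥0∞) ^ 2) ^ (1 / 2 : ℝ)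

/-! ### Characters and unit cubes -/

/-- The character `e^{2πi x·ξ}` on `ℝⁿ`. -/
noncomputable def echar {n : ℕ} (x ξ : Fin n → ℝ) : ℂ :=
  Complex.exp (2 * π * Complex.I * (∑ i, x i * ξ i))

/-- The half-open unit cube `∏ᵢ (bᵢ, bᵢ + 1]`. -/
def unitCube {n : ℕ} (b : Fin n → ℝ) : Set (Fin n → ℝ) :=
  {x | ∀ i, x i ∈ Set.Ioc (b i) (b i + 1)}

lemma norm_echar {n : ℕ} (x ξ : Fin n → ℝ) : ‖echar x ξ‖ = 1 := by
  rw [echar, Complex.norm_exp]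
  have : (2 * (π : ℂ) * Complex.I * ((∑ i, x i * ξ i : ℝ) : ℂ)).re = 0 := by simp
  rw [this, Real.exp_zero]

lemma echar_neg_left {n : ℕ} (x ξ : Fin n → ℝ) :
    echar (-x) ξ = Complex.exp (-(2 * π * Complex.I * (∑ i, x i * ξ i))) := by
  simp [echar]

lemma echar_conj {n : ℕ} (x ξ : Fin n → ℝ) : (starRingEnd ℂ) (echar x ξ) = echar (-x) ξ := by
  rw [echar_neg_left, echar, ← Complex.exp_conj]
  simp only [map_mul, Complex.conj_ofReal, Complex.conj_I, map_ofNat]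
  congr 1
  ring

lemma echar_comm {n : ℕ} (x ξ : Fin n → ℝ) : echar x ξ = echar ξ x := by
  simp [echar, mul_comm]

lemma echar_add_left {n : ℕ} (x y ξ : Fin n → ℝ) :
    echar (x + y) ξ = echar x ξ * echar y ξ := by
  simp [echar, ← Complex.exp_add, add_mul, mul_add, Finset.sum_add_distrib]

lemma echar_add_right {n : ℕ} (x y ξ : Fin n → ℝ) :
    echar ξ (x + y) = echar ξ x * echar ξ y := by
  rw [echar_comm, echar_add_left, echar_comm x, echar_comm y]

lemma echar_int_int {n : ℕ} (l k : Fin n → ℤ) :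
    echar (fun i => (l i : ℝ)) (fun i => (k i : ℝ)) = 1 := by
  rw [echar, Complex.exp_eq_one_iff]
  refine ⟨∑ i, l i * k i, ?_⟩
  push_cast
  ring

@[fun_prop]
lemma continuous_echar {n : ℕ} {X : Type*} [TopologicalSpace X] {f g : X → Fin n → ℝ}
    (hf : Continuous f) (hg : Continuous g) : Continuous fun t => echar (f t) (g t) := by
  unfold echar
  fun_prop

lemma mFourier_coe_eq_echar {n : ℕ} (l : Fin n → ℤ) (x : Fin n → ℝ) :
    UnitAddTorus.mFourier l (fun i => (x i : UnitAddCircle)) = echar (fun i => (l i : ℝ)) x := by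
  simp only [UnitAddTorus.mFourier, ContinuousMap.coe_mk, fourier_coe_apply, echar,
    ← Complex.exp_sum]
  congr 1
  push_cast
  rw [Finset.mul_sum]
  refine Finset.sum_congr rfl fun i _ => ?_
  ring

lemma measurableSet_unitCube {n : ℕ} (b : Fin n → ℝ) : MeasurableSet (unitCube b) :=
  MeasurableSet.univ_pi' fun _ => measurableSet_Ioc

lemma unitCube_ae_eq {n : ℕ} (b : Fin n → ℝ) :
    unitCube b =ᵐ[volume] Set.Icc b (fun i => b i + 1) := by
  have := Measure.univ_pi_Ioc_ae_eq_Icc (μ := fun _ : Fin n => (volume : Measure ℝ))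
    (f := b) (g := fun i => b i + 1)
  have h : unitCube b = Set.univ.pi fun i => Set.Ioc (b i) (b i + 1) := by
    ext; simp [unitCube]
  rw [h]; exact this

lemma unitCube_subset {n : ℕ} (b : Fin n → ℝ) : unitCube b ⊆ Set.Icc b (fun i => b i + 1) :=
  fun _ hx => ⟨fun i => (hx i).1.le, fun i => (hx i).2⟩

/-! ### Parseval and Plancherel -/

section Parseval

-- Fourier series on `UnitAddTorus` are developed for these instances, which are local to their
-- source file and do not unify with `AddCircle.measureSpace`.
attribute [local instance] instMeasureSpaceUnitAddCircle
  instIsAddHaarMeasureUnitAddCircleVolume instIsProbabilityMeasureUnitAddCircleVolume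

/-- **Parseval's identity** on a unit cube. A function on the cube is a function on the torus, so
`H` need not be periodic; the left side runs over all coefficients, so the sign of `l` does not
matter. -/
lemma tsum_enorm_sq_eq_lintegral {n : ℕ} (b : Fin n → ℝ) {H : (Fin n → ℝ) → ℂ}
    (hH : Continuous H) :
    ∑' l : Fin n → ℤ, ‖∫ η in unitCube b, echar (fun i => (l i : ℝ)) η * H η‖ₑ ^ 2 =
      ∫⁻ η in unitCube b, ‖H η‖ₑ ^ 2 := by
  set F : UnitAddTorus (Fin n) → ℂ := fun t => H (UnitAddTorus.measurableEquivPiIoc b t).1 with hF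
  have hFx : ∀ x ∈ unitCube b, F (fun i => (x i : UnitAddCircle)) = H x := by
    intro x hx
    have : UnitAddTorus.measurableEquivPiIoc b (fun i => (x i : UnitAddCircle)) = ⟨x, hx⟩ := by
      rw [← UnitAddTorus.coe_symm_measurableEquivPiIoc_apply b ⟨x, hx⟩,
        MeasurableEquiv.apply_symm_apply]
    rw [hF]
    simp only [this]
  obtain ⟨B, hB⟩ := (isCompact_Icc (a := b) (b := fun i => b i + 1)).exists_bound_of_continuousOn
    hH.continuousOn
  have hFm : MemLp F 2 volume := by
    refine MemLp.of_bound (C := B) ?_ ?_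
    · exact (hH.measurable.comp (measurable_subtype_coe.comp
        (UnitAddTorus.measurableEquivPiIoc b).measurable)).aestronglyMeasurable
    · exact Filter.Eventually.of_forall fun t =>
        hB _ (unitCube_subset b (UnitAddTorus.measurableEquivPiIoc b t).2)
  have hcoef : ∀ l : Fin n → ℤ, UnitAddTorus.mFourierCoeff (hFm.toLp F) l =
      ∫ η in unitCube b, echar (fun i => ((-l) i : ℝ)) η * H η := by
    intro l
    have h1 : UnitAddTorus.mFourierCoeff (hFm.toLp F) l = UnitAddTorus.mFourierCoeff F l :=
      integral_congr_ae (Filter.EventuallyEq.rfl.mul hFm.coeFn_toLp)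
    rw [h1, UnitAddTorus.mFourierCoeff_eq_integral F l b]
    refine setIntegral_congr_fun (measurableSet_unitCube b) fun x hx => ?_
    simp only [smul_eq_mul]
    rw [hFx x hx, mFourier_coe_eq_echar]
  have hs := UnitAddTorus.hasSum_sq_mFourierCoeff (hFm.toLp F)
  have h2 : ∫ t, ‖(hFm.toLp F) t‖ ^ 2 = ∫ t, ‖F t‖ ^ 2 :=
    integral_congr_ae (hFm.coeFn_toLp.mono fun t ht => by simp only [ht])
  rw [h2] at hs
  have h3 : ∫⁻ t, ‖F t‖ₑ ^ 2 = ∫⁻ η in unitCube b, ‖H η‖ₑ ^ 2 := by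
    rw [UnitAddTorus.lintegral_preimage _ b]
    exact setLIntegral_congr_fun (measurableSet_unitCube b) fun x hx => by
      simp only [hFx x hx]
  have hsq : ∀ z : ℂ, ‖z‖ₑ ^ 2 = ENNReal.ofReal (‖z‖ ^ 2) := fun z => by
    rw [ENNReal.ofReal_pow (norm_nonneg _), ofReal_norm]
  rw [← h3, ← (Equiv.neg (Fin n → ℤ)).tsum_eq]
  simp_rw [hsq]
  rw [← ofReal_integral_eq_lintegral_ofReal (hFm.integrable_norm_pow (by norm_num))
    (Filter.Eventually.of_forall fun _ => by positivity), ← hs.tsum_eq,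
    ENNReal.ofReal_tsum_of_nonneg (fun _ => by positivity) hs.summable]
  refine tsum_congr fun l => ?_
  rw [hcoef]
  simp

end Parseval

/-- Every `g ∈ C_c^∞(ℝⁿ)` is the Fourier transform of a Schwartz function with the same `L²` norm.
The Fourier transform of Mathlib lives on inner product spaces, whence the passage through
`EuclideanSpace ℝ (Fin n)`. -/
lemma exists_schwartz_fourier {n : ℕ} {g : (Fin n → ℝ) → ℂ} (hg : ContDiff ℝ (⊤ : ℕ∞) g)
    (hc : HasCompactSupport g) :
    ∃ f : SchwartzMap (Fin n → ℝ) ℂ, (∀ ξ, ∫ y, echar (-y) ξ * f y = g ξ) ∧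
      ∫⁻ y, ‖f y‖ₑ ^ 2 = ∫⁻ ξ, ‖g ξ‖ₑ ^ 2 := by
  let e : EuclideanSpace ℝ (Fin n) ≃L[ℝ] (Fin n → ℝ) := EuclideanSpace.equiv (Fin n) ℝ
  have hmp : MeasurePreserving (WithLp.toLp 2 : (Fin n → ℝ) → EuclideanSpace ℝ (Fin n)) :=
    PiLp.volume_preserving_toLp (Fin n)
  have hemb : MeasurableEmbedding (WithLp.toLp 2 : (Fin n → ℝ) → EuclideanSpace ℝ (Fin n)) :=
    (MeasurableEquiv.toLp 2 (Fin n → ℝ)).measurableEmbedding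
  have hc' : HasCompactSupport (g ∘ e) := hc.comp_homeomorph e.toHomeomorph
  let G : SchwartzMap (EuclideanSpace ℝ (Fin n)) ℂ :=
    hc'.toSchwartzMap (hg.comp e.contDiff)
  have hG : ∀ ξ, G (WithLp.toLp 2 ξ) = g ξ := fun ξ => rfl
  let P : SchwartzMap (EuclideanSpace ℝ (Fin n)) ℂ := FourierTransform.fourierInv G
  have hP : FourierTransform.fourier P = G := FourierTransform.fourier_fourierInv_eq G
  let f : SchwartzMap (Fin n → ℝ) ℂ := SchwartzMap.compCLMOfContinuousLinearEquiv ℂ e.symm P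
  have hf : ∀ y, f y = P (WithLp.toLp 2 y) := fun y => rfl
  refine ⟨f, fun ξ => ?_, ?_⟩
  · rw [← hG ξ, ← hP, SchwartzMap.fourier_coe, Real.fourier_eq', ← hmp.integral_comp hemb]
    refine integral_congr_ae (Filter.Eventually.of_forall fun y => ?_)
    simp only [hf, smul_eq_mul]
    congr 1
    rw [echar_neg_left]
    congr 1
    simp [PiLp.inner_apply]
    simp only [mul_comm]
    ring_nf
  · have h := SchwartzMap.integral_norm_sq_fourier P
    have key : ∀ Q : SchwartzMap (EuclideanSpace ℝ (Fin n)) ℂ,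
        ∫⁻ y, ‖Q (WithLp.toLp 2 y)‖ₑ ^ 2 = ENNReal.ofReal (∫ x, ‖Q x‖ ^ 2) := by
      intro Q
      rw [hmp.lintegral_comp_emb hemb (fun x => ‖Q x‖ₑ ^ 2),
        ofReal_integral_eq_lintegral_ofReal ((Q.memLp 2 volume).integrable_norm_pow (by norm_num))
        (Filter.Eventually.of_forall fun _ => by positivity)]
      refine lintegral_congr fun x => ?_
      rw [ENNReal.ofReal_pow (norm_nonneg _), ofReal_norm]
    simp_rw [hf, ← hG]
    rw [key, key, ← h, hP]

/-! ### Transference from `ℝⁿ` to the torus -/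

/-- The integer translates of the half-open unit cube are disjoint. They also cover `ℝⁿ`, but the
inequality is enough and needs no measurability of `h`. -/
lemma lintegral_translates_le {n : ℕ} (h : (Fin n → ℝ) → ℝ≥0∞) :
    ∑' l : Fin n → ℤ, ∫⁻ x in unitCube (0 : Fin n → ℝ), h (x + fun i => (l i : ℝ)) ≤
      ∫⁻ x, h x := by
  set s : (Fin n → ℤ) → Set (Fin n → ℝ) := fun l =>
    (fun x => x + fun i => (l i : ℝ)) '' unitCube (0 : Fin n → ℝ) with hs
  have hemb : ∀ l : Fin n → ℤ, MeasurableEmbedding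
      (fun x : Fin n → ℝ => x + fun i => (l i : ℝ)) := fun l =>
    measurableEmbedding_addRight _
  have hmp : ∀ l : Fin n → ℤ, MeasurePreserving
      (fun x : Fin n → ℝ => x + fun i => (l i : ℝ)) := fun l =>
    measurePreserving_add_right volume _
  have hdisj : Pairwise (Function.onFun Disjoint s) := by
    intro l l' hne
    rw [Function.onFun, Set.disjoint_left]
    rintro _ ⟨x, hx, rfl⟩ ⟨y, hy, hxy⟩
    apply hne
    funext i
    have h1 : y i + (l' i : ℝ) = x i + (l i : ℝ) := congrFun hxy i
    have hx1 : 0 < x i ∧ x i ≤ 1 := by simpa using hx i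
    have hy1 : 0 < y i ∧ y i ≤ 1 := by simpa using hy i
    have h2 : (l i : ℝ) < l' i + 1 := by linarith [hx1.1, hy1.2]
    have h3 : (l' i : ℝ) < l i + 1 := by linarith [hx1.2, hy1.1]
    have h2' : l i < l' i + 1 := by exact_mod_cast h2
    have h3' : l' i < l i + 1 := by exact_mod_cast h3
    omega
  calc ∑' l : Fin n → ℤ, ∫⁻ x in unitCube (0 : Fin n → ℝ), h (x + fun i => (l i : ℝ))
      = ∑' l, ∫⁻ x in s l, h x := by
        refine tsum_congr fun l => ?_
        rw [(hmp l).setLIntegral_comp_emb (hemb l) h]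
    _ = ∫⁻ x in ⋃ l, s l, h x := by
        rw [lintegral_iUnion (fun l => (hemb l).measurableSet_image.2
          (measurableSet_unitCube 0)) hdisj]
    _ ≤ ∫⁻ x, h x := setLIntegral_le_lintegral _ _

/-- The sum `∑ₖ c(k) e^{2πi k·x} a(x, η + k)` over `k ∈ S`: the periodic operator with symbol
`a(x, η + ·)` applied to the trigonometric polynomial with coefficients `c` on `S`. -/
noncomputable def shiftedSum {n : ℕ} (a : (Fin n → ℝ) × (Fin n → ℝ) → ℂ)
    (S : Finset (Fin n → ℤ)) (c : (Fin n → ℤ) → ℂ) (x η : Fin n → ℝ) : ℂ :=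
  ∑ k ∈ S, c k * echar (fun i => (k i : ℝ)) x * a (x, η + fun i => (k i : ℝ))

lemma continuous_shiftedSum {n : ℕ} {a : (Fin n → ℝ) × (Fin n → ℝ) → ℂ} (ha : Continuous a)
    (S : Finset (Fin n → ℤ)) (c : (Fin n → ℤ) → ℂ) :
    Continuous fun p : (Fin n → ℝ) × (Fin n → ℝ) => shiftedSum a S c p.1 p.2 := by
  unfold shiftedSum
  fun_prop

/-- If the Fourier transform of `f` is `∑ₖ c(k) φ(ξ - k)` with `φ` supported in a unit cube, the
values of `T f` on the coset `x + ℤⁿ` are the Fourier coefficients of a single function on that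
cube. Periodicity of `a` removes `l` from the symbol, and `e^{2πi l·k} = 1` removes it from the
sum over `k`. -/
lemma pdo_add_int {n : ℕ} {a : (Fin n → ℝ) × (Fin n → ℝ) → ℂ} (ha : Continuous a)
    (haper : ∀ (x ξ : Fin n → ℝ) (j : Fin n → ℤ), a (x + (fun i => (j i : ℝ)), ξ) = a (x, ξ))
    (S : Finset (Fin n → ℤ)) (c : (Fin n → ℤ) → ℂ) {φ : (Fin n → ℝ) → ℝ} (hφ : Continuous φ)
    (hφc : HasCompactSupport φ) {b : Fin n → ℝ} (hφs : ∀ η, η ∉ unitCube b → φ η = 0)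
    {f : (Fin n → ℝ) → ℂ}
    (hf : ∀ ξ, ∫ y, echar (-y) ξ * f y = ∑ k ∈ S, c k * φ (ξ - fun i => (k i : ℝ)))
    (x : Fin n → ℝ) (l : Fin n → ℤ) :
    pdo n a f (x + fun i => (l i : ℝ)) =
      ∫ η in unitCube b, echar (fun i => (l i : ℝ)) η *
        (echar x η * φ η * shiftedSum a S c x η) := by
  have h0 : pdo n a f (x + fun i => (l i : ℝ)) =
      ∫ ξ, ∑ k ∈ S, echar (x + fun i => (l i : ℝ)) ξ * a (x, ξ) *
        (c k * φ (ξ - fun i => (k i : ℝ))) := by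
    unfold pdo
    refine integral_congr_ae (Filter.Eventually.of_forall fun ξ => ?_)
    simp only
    rw [← Finset.mul_sum, ← hf ξ, haper]
    simp_rw [echar_neg_left]
    rfl
  have hcs : HasCompactSupport fun η => (φ η : ℂ) :=
    hφc.comp_left (g := fun t : ℝ => (t : ℂ)) Complex.ofReal_zero
  have hint : ∀ (u : (Fin n → ℝ) → ℂ), Continuous u → ∀ k : Fin n → ℤ,
      Integrable fun ξ => u ξ * (c k * φ (ξ - fun i => (k i : ℝ))) := by
    intro u hu k
    refine Continuous.integrable_of_hasCompactSupport (by fun_prop) ?_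
    have := hcs.comp_homeomorph (Homeomorph.subRight (fun i => (k i : ℝ)))
    exact (this.mul_left (f := fun _ => c k)).mul_left
  have hint0 : ∀ (u : (Fin n → ℝ) → ℂ), Continuous u → Integrable fun ξ => u ξ * φ ξ := by
    intro u hu
    exact Continuous.integrable_of_hasCompactSupport (by fun_prop) hcs.mul_left
  rw [h0, integral_finsetSum _ fun k _ => hint
    (fun ξ => echar (x + fun i => (l i : ℝ)) ξ * a (x, ξ)) (by fun_prop) k]
  rw [setIntegral_eq_integral_of_forall_compl_eq_zero
    (fun η hη => by rw [hφs η hη]; simp)]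
  have h1 : ∀ η, echar (fun i => (l i : ℝ)) η * (echar x η * φ η * shiftedSum a S c x η) =
      ∑ k ∈ S, (echar (x + fun i => (l i : ℝ)) (η + fun i => (k i : ℝ)) *
        a (x, η + fun i => (k i : ℝ)) * c k) * φ η := by
    intro η
    rw [shiftedSum, Finset.mul_sum, Finset.mul_sum]
    refine Finset.sum_congr rfl fun k _ => ?_
    rw [echar_add_right, echar_add_left, echar_add_left, echar_int_int,
      echar_comm (fun i => (k i : ℝ)) x]
    ring
  simp_rw [h1]
  rw [integral_finsetSum _ fun k _ => hint0 (fun η => echar (x + fun i => (l i : ℝ))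
    (η + fun i => (k i : ℝ)) * a (x, η + fun i => (k i : ℝ)) * c k) (by fun_prop)]
  refine Finset.sum_congr rfl fun k _ => ?_
  rw [← integral_add_right_eq_self _ (fun i => (k i : ℝ))]
  refine integral_congr_ae (Filter.Eventually.of_forall fun η => ?_)
  simp only [add_sub_cancel_right]
  ring

/-- The translates `φ(· - k)` have disjoint supports, so there are no cross terms. -/
lemma lintegral_bump_sum {n : ℕ} (S : Finset (Fin n → ℤ)) (c : (Fin n → ℤ) → ℂ)
    {φ : (Fin n → ℝ) → ℝ} (hφ : Continuous φ) (hφs : ∀ η, 1 / 2 ≤ ‖η‖ → φ η = 0) :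
    ∫⁻ ξ, ‖∑ k ∈ S, c k * (φ (ξ - fun i => (k i : ℝ)) : ℂ)‖ₑ ^ 2 =
      (∑ k ∈ S, ‖c k‖ₑ ^ 2) * ∫⁻ η, ‖φ η‖ₑ ^ 2 := by
  have hpt : ∀ ξ, ‖∑ k ∈ S, c k * (φ (ξ - fun i => (k i : ℝ)) : ℂ)‖ₑ ^ 2 =
      ∑ k ∈ S, ‖c k‖ₑ ^ 2 * ‖φ (ξ - fun i => (k i : ℝ))‖ₑ ^ 2 := by
    intro ξ
    by_cases h : ∃ k ∈ S, φ (ξ - fun i => (k i : ℝ)) ≠ 0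
    · obtain ⟨k, hk, hne⟩ := h
      have huniq : ∀ j ∈ S, j ≠ k → φ (ξ - fun i => (j i : ℝ)) = 0 := by
        intro j _ hjk
        by_contra hj
        apply hjk
        have h1 : ‖ξ - fun i => (k i : ℝ)‖ < 1 / 2 := by
          by_contra h; exact hne (hφs _ (not_lt.1 h))
        have h2 : ‖ξ - fun i => (j i : ℝ)‖ < 1 / 2 := by
          by_contra h; exact hj (hφs _ (not_lt.1 h))
        funext i
        have h1i := abs_lt.1 ((norm_le_pi_norm _ i).trans_lt h1)
        have h2i := abs_lt.1 ((norm_le_pi_norm _ i).trans_lt h2)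
        simp only [Pi.sub_apply] at h1i h2i
        have h3 : (j i : ℝ) < k i + 1 := by linarith [h1i.1, h2i.2, h1i.2, h2i.1]
        have h4 : (k i : ℝ) < j i + 1 := by linarith [h1i.1, h2i.2, h1i.2, h2i.1]
        have h3' : j i < k i + 1 := by exact_mod_cast h3
        have h4' : k i < j i + 1 := by exact_mod_cast h4
        omega
      rw [Finset.sum_eq_single_of_mem k hk fun j hj hjk => by simp [huniq j hj hjk],
        Finset.sum_eq_single_of_mem k hk fun j hj hjk => by simp [huniq j hj hjk],
        enorm_mul, mul_pow]
      congr 2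
      rw [← ofReal_norm, ← ofReal_norm, Complex.norm_real]
    · push Not at h
      rw [Finset.sum_eq_zero fun j hj => by simp [h j hj],
        Finset.sum_eq_zero fun j hj => by simp [h j hj]]
      simp
  simp_rw [hpt]
  rw [lintegral_finsetSum' _ fun k _ => by fun_prop, Finset.sum_mul]
  refine Finset.sum_congr rfl fun k _ => ?_
  rw [lintegral_const_mul' _ _ (by finiteness),
    lintegral_sub_right_eq_self (fun η => ‖φ η‖ₑ ^ 2)]

lemma eLpNorm_two_sq {α E : Type*} [MeasurableSpace α] [NormedAddCommGroup E] (μ : Measure α)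
    (g : α → E) : eLpNorm g 2 μ ^ 2 = ∫⁻ x, ‖g x‖ₑ ^ 2 ∂μ := by
  have := eLpNorm_nnreal_pow_eq_lintegral (f := g) (μ := μ) (p := 2) two_ne_zero
  simpa using this

/-- The periodic operator with symbol `a(x, k)` on the torus inherits the `L²` bound of the
Euclidean operator. -/
lemma lintegral_shiftedSum_zero_le {n : ℕ} {a : (Fin n → ℝ) × (Fin n → ℝ) → ℂ} (ha : Continuous a)
    (haper : ∀ (x ξ : Fin n → ℝ) (j : Fin n → ℤ), a (x + (fun i => (j i : ℝ)), ξ) = a (x, ξ))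
    {C : ℝ} (hT : ∀ f : SchwartzMap (Fin n → ℝ) ℂ,
      eLpNorm (pdo n a f) 2 volume ≤ ENNReal.ofReal C * eLpNorm f 2 volume)
    (S : Finset (Fin n → ℤ)) (c : (Fin n → ℤ) → ℂ) :
    ∫⁻ x in unitCube (0 : Fin n → ℝ), ‖shiftedSum a S c x 0‖ₑ ^ 2 ≤
      ENNReal.ofReal C ^ 2 * ∑ k ∈ S, ‖c k‖ₑ ^ 2 := by
  have hA := continuous_shiftedSum ha S c
  refine ENNReal.le_of_forall_pos_le_add fun ε hε _ => ?_
  -- `r` is the radius of the bump: by uniform continuity, the shift by `η` costs at most `ε` there.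
  obtain ⟨r, hr0, hr, hclose⟩ : ∃ r : ℝ, 0 < r ∧ r ≤ 1 / 2 ∧
      ∀ x ∈ unitCube (0 : Fin n → ℝ), ∀ η : Fin n → ℝ, ‖η‖ < r →
        ‖shiftedSum a S c x 0‖ₑ ^ 2 ≤ ‖shiftedSum a S c x η‖ₑ ^ 2 + ε := by
    have hu : UniformContinuousOn
        (fun p : (Fin n → ℝ) × (Fin n → ℝ) => ‖shiftedSum a S c p.1 p.2‖ ^ 2)
        (Set.Icc (0 : Fin n → ℝ) (fun i => (0 : Fin n → ℝ) i + 1) ×ˢ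
          Metric.closedBall (0 : Fin n → ℝ) 1) :=
      (isCompact_Icc.prod (isCompact_closedBall _ _)).uniformContinuousOn_of_continuous
        (by fun_prop)
    rw [Metric.uniformContinuousOn_iff] at hu
    obtain ⟨δ, hδ, hu⟩ := hu ε hε
    refine ⟨min δ (1 / 2), by positivity, min_le_right _ _, fun x hx η hη => ?_⟩
    have h1 : ‖η‖ < δ := hη.trans_le (min_le_left _ _)
    have h2 : ‖η‖ ≤ 1 := (hη.trans_le (min_le_right _ _)).le.trans (by norm_num)
    have h3 := hu (x, 0) ⟨unitCube_subset 0 hx, by simp⟩ (x, η)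
      ⟨unitCube_subset 0 hx, by simpa using h2⟩ (by simpa [Prod.dist_eq] using h1)
    rw [Real.dist_eq] at h3
    have h4 := (abs_lt.1 h3).2
    have h5 : ‖shiftedSum a S c x 0‖ ^ 2 ≤ ‖shiftedSum a S c x η‖ ^ 2 + ε := by
      simp only at h4
      linarith
    have h6 := ENNReal.ofReal_le_ofReal h5
    rw [ENNReal.ofReal_add (by positivity) (by positivity), ENNReal.ofReal_pow (norm_nonneg _),
      ENNReal.ofReal_pow (norm_nonneg _), ofReal_norm, ofReal_norm, ENNReal.ofReal_coe_nnreal] at h6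
    exact h6
  let φ : ContDiffBump (0 : Fin n → ℝ) := ⟨r / 2, r, by positivity, by linarith⟩
  have hφ0 : ∀ η, r ≤ ‖η‖ → φ η = 0 := fun η hη => φ.zero_of_le_dist (by simpa using hη)
  set b : Fin n → ℝ := fun _ => -(1 / 2) with hb
  have hφb : ∀ η, η ∉ unitCube b → φ η = 0 := by
    intro η hη
    apply hφ0
    by_contra hlt
    refine hη fun i => ?_
    have h := abs_lt.1 (((norm_le_pi_norm η i).trans_lt (not_le.1 hlt)).trans_le hr)
    exact ⟨h.1, by simp only [hb]; linarith [h.2]⟩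
  have hφcont : Continuous φ := φ.continuous
  set J : ℝ≥0∞ := ∫⁻ η, ‖φ η‖ₑ ^ 2 with hJ
  have hJtop : J ≠ ∞ := by
    have := (hφcont.memLp_of_hasCompactSupport (μ := volume) (p := 2)
      φ.hasCompactSupport).eLpNorm_ne_top
    rw [hJ, ← eLpNorm_two_sq]
    finiteness
  have hJ0 : J ≠ 0 := by
    rw [hJ, ← pos_iff_ne_zero, lintegral_pos_iff_support (by fun_prop)]
    have hs : Function.support (fun η => ‖φ η‖ₑ ^ 2) = Function.support φ := by
      ext η; simp
    rw [hs]
    refine hφcont.isOpen_support.measure_pos _ ⟨0, ?_⟩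
    simp [φ.one_of_mem_closedBall (x := 0) (by simp [φ.rIn_pos.le])]
  have hJcube : ∫⁻ η in unitCube b, ‖φ η‖ₑ ^ 2 = J := by
    refine setLIntegral_eq_of_support_subset ?_
    intro η hη
    by_contra h
    exact hη (by simp [hφb η h])
  obtain ⟨f, hf, hfn⟩ := exists_schwartz_fourier
    (g := fun ξ => ∑ k ∈ S, c k * (φ (ξ - fun i => (k i : ℝ)) : ℂ))
    (by
      refine ContDiff.sum fun k _ => contDiff_const.mul ?_
      exact Complex.ofRealCLM.contDiff.comp (φ.contDiff.comp (contDiff_id.sub contDiff_const)))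
    (by
      refine HasCompactSupport.intro (K := ⋃ k ∈ S, Metric.closedBall (fun i => (k i : ℝ)) r)
        (S.isCompact_biUnion fun k _ => isCompact_closedBall _ _) fun ξ hξ => ?_
      refine Finset.sum_eq_zero fun k hk => ?_
      rw [hφ0 _ ?_]
      · simp
      · by_contra hlt
        refine hξ (Set.mem_biUnion hk ?_)
        rw [Metric.mem_closedBall, dist_eq_norm]
        exact (not_le.1 hlt).le)
  rw [lintegral_bump_sum S c hφcont fun η hη => hφ0 η (hr.trans hη), ← hJ] at hfn
  have hpdo := fun x l => pdo_add_int ha haper S c hφcont φ.hasCompactSupport hφb hf x l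
  have hG : Continuous fun ξ => ∑ k ∈ S, c k * (φ (ξ - fun i => (k i : ℝ)) : ℂ) := by fun_prop
  have hmeas : Measurable (pdo n a f) := by
    have h1 : pdo n a f = fun x => ∫ ξ, echar x ξ * a (x, ξ) *
        ∑ k ∈ S, c k * (φ (ξ - fun i => (k i : ℝ)) : ℂ) := by
      funext x
      unfold pdo
      refine integral_congr_ae (Filter.Eventually.of_forall fun ξ => ?_)
      simp only
      rw [← hf ξ]
      simp_rw [echar_neg_left]
      rfl
    rw [h1]
    have h2 : Continuous fun p : (Fin n → ℝ) × (Fin n → ℝ) => echar p.1 p.2 * a (p.1, p.2) *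
        ∑ k ∈ S, c k * (φ (p.2 - fun i => (k i : ℝ)) : ℂ) := by fun_prop
    exact (h2.stronglyMeasurable.integral_prod_right).measurable
  -- Parseval in the fibre over each `x`, then summation over the tiling of `ℝⁿ` by unit cubes.
  have hupper : ∫⁻ x in unitCube (0 : Fin n → ℝ), ∫⁻ η in unitCube b,
      ‖φ η‖ₑ ^ 2 * ‖shiftedSum a S c x η‖ₑ ^ 2 ≤
      ENNReal.ofReal C ^ 2 * ((∑ k ∈ S, ‖c k‖ₑ ^ 2) * J) := by
    calc _ = ∫⁻ x in unitCube (0 : Fin n → ℝ), ∑' l : Fin n → ℤ,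
          ‖pdo n a f (x + fun i => (l i : ℝ))‖ₑ ^ 2 := by
          refine lintegral_congr fun x => ?_
          simp_rw [hpdo x]
          rw [tsum_enorm_sq_eq_lintegral b (by fun_prop)]
          refine lintegral_congr fun η => ?_
          have h1 : ‖echar x η‖ₑ = 1 := by rw [← ofReal_norm, norm_echar]; simp
          have h2 : ‖((φ η : ℝ) : ℂ)‖ₑ = ‖φ η‖ₑ := by
            rw [← ofReal_norm, ← ofReal_norm, Complex.norm_real]
          rw [enorm_mul, enorm_mul, h1, h2, one_mul, mul_pow]
      _ = ∑' l : Fin n → ℤ, ∫⁻ x in unitCube (0 : Fin n → ℝ),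
          ‖pdo n a f (x + fun i => (l i : ℝ))‖ₑ ^ 2 := by
          rw [lintegral_tsum fun l => by fun_prop]
      _ ≤ ∫⁻ x, ‖pdo n a f x‖ₑ ^ 2 := lintegral_translates_le fun x => ‖pdo n a f x‖ₑ ^ 2
      _ = eLpNorm (pdo n a f) 2 volume ^ 2 := (eLpNorm_two_sq _ _).symm
      _ ≤ (ENNReal.ofReal C * eLpNorm f 2 volume) ^ 2 := by gcongr; exact hT f
      _ = _ := by rw [mul_pow, eLpNorm_two_sq, hfn]
  have hvol : volume (unitCube (0 : Fin n → ℝ)) = 1 := by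
    rw [measure_congr (unitCube_ae_eq 0), Real.volume_Icc_pi]
    simp
  -- Replacing `η` by `0` on the support of `φ`; the mass `J` of `φ²` then cancels.
  have hmain : J * ∫⁻ x in unitCube (0 : Fin n → ℝ), ‖shiftedSum a S c x 0‖ₑ ^ 2 ≤
      J * (ENNReal.ofReal C ^ 2 * (∑ k ∈ S, ‖c k‖ₑ ^ 2) + ε) := by
    calc _ = ∫⁻ x in unitCube (0 : Fin n → ℝ), ∫⁻ η in unitCube b,
          ‖φ η‖ₑ ^ 2 * ‖shiftedSum a S c x 0‖ₑ ^ 2 := by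
          rw [← lintegral_const_mul' _ _ hJtop]
          refine lintegral_congr fun x => ?_
          rw [lintegral_mul_const' _ _ (by finiteness), hJcube]
      _ ≤ ∫⁻ x in unitCube (0 : Fin n → ℝ), ((∫⁻ η in unitCube b,
          ‖φ η‖ₑ ^ 2 * ‖shiftedSum a S c x η‖ₑ ^ 2) + J * ε) := by
          refine setLIntegral_mono' (measurableSet_unitCube 0) fun x hx => ?_
          rw [← hJcube, ← lintegral_mul_const' _ _ (by finiteness),
            ← lintegral_add_right _ (by fun_prop)]
          refine lintegral_mono fun η => ?_
          simp only
          rw [← mul_add]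
          rcases lt_or_ge ‖η‖ r with h | h
          · gcongr; exact hclose x hx η h
          · simp [hφ0 η h]
      _ = (∫⁻ x in unitCube (0 : Fin n → ℝ), ∫⁻ η in unitCube b,
          ‖φ η‖ₑ ^ 2 * ‖shiftedSum a S c x η‖ₑ ^ 2) + J * ε := by
          rw [lintegral_add_right _ measurable_const, setLIntegral_const, hvol, mul_one]
      _ ≤ ENNReal.ofReal C ^ 2 * ((∑ k ∈ S, ‖c k‖ₑ ^ 2) * J) + J * ε := by gcongr
      _ = _ := by ring
  exact (ENNReal.mul_le_mul_iff_right hJ0 hJtop).1 hmain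

/-! ### Duality -/

/-- The entry `∫_{(0,1]ⁿ} e^{2πi (j-k)·ξ} a(ξ,-k) dξ`, a Fourier coefficient of `a(·,-k)`. It is
the complex conjugate of the `(k, j)` matrix entry of the discrete operator with symbol
`conj (a(ξ,-k))`. -/
noncomputable def fourierEntry {n : ℕ} (a : (Fin n → ℝ) × (Fin n → ℝ) → ℂ)
    (j k : Fin n → ℤ) : ℂ :=
  ∫ ξ in unitCube (0 : Fin n → ℝ), echar (fun i => (j i : ℝ)) ξ *
    (echar (-fun i => (k i : ℝ)) ξ * a (ξ, fun i => -(k i : ℝ)))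

lemma integrableOn_unitCube {n : ℕ} {g : (Fin n → ℝ) → ℂ} (hg : Continuous g)
    (b : Fin n → ℝ) : IntegrableOn g (unitCube b) :=
  (hg.integrableOn_Icc (a := b) (b := fun i => b i + 1)).mono_set (unitCube_subset b)

lemma discretePdo_eq_sum {n : ℕ} {a : (Fin n → ℝ) × (Fin n → ℝ) → ℂ} (ha : Continuous a)
    {f : (Fin n → ℤ) → ℂ} (hf : (Function.support f).Finite) (k : Fin n → ℤ) :
    discretePdo n (fun k ξ => (starRingEnd ℂ) (a (ξ, fun i => -(k i : ℝ)))) f k =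
      ∑ j ∈ hf.toFinset, f j * (starRingEnd ℂ) (fourierEntry a j k) := by
  have h1 : (Set.Icc (0 : Fin n → ℝ) 1) =ᵐ[volume] unitCube (0 : Fin n → ℝ) := by
    have := (unitCube_ae_eq (0 : Fin n → ℝ)).symm
    have h2 : (fun i => (0 : Fin n → ℝ) i + 1) = 1 := by ext; simp
    rwa [h2] at this
  unfold discretePdo fourierEntry
  rw [setIntegral_congr_set h1]
  simp_rw [← integral_conj, ← integral_const_mul]
  rw [← integral_finsetSum]
  · refine integral_congr_ae (Filter.Eventually.of_forall fun ξ => ?_)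
    simp only
    rw [tsum_eq_sum (s := hf.toFinset) (fun j hj => by
      have : f j = 0 := by simpa using hj
      simp [this]), Finset.mul_sum]
    refine Finset.sum_congr rfl fun j _ => ?_
    rw [map_mul, map_mul, echar_conj, echar_conj, neg_neg, echar_neg_left, echar]
    ring
  · intro j _
    have hc : Continuous (starRingEnd ℂ) := Complex.continuous_conj
    exact integrableOn_unitCube (by fun_prop) 0

lemma ofReal_sum_norm_sq {α : Type*} (S : Finset α) (u : α → ℂ) :
    ENNReal.ofReal (∑ k ∈ S, ‖u k‖ ^ 2) = ∑ k ∈ S, ‖u k‖ₑ ^ 2 := by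
  rw [ENNReal.ofReal_sum_of_nonneg fun _ _ => by positivity]
  refine Finset.sum_congr rfl fun k _ => ?_
  rw [ENNReal.ofReal_pow (norm_nonneg _), ofReal_norm]

/-- The `ℓ²` bound for the conjugate transpose of the discrete operator. The trigonometric
polynomial whose image has the Fourier coefficients on the left has frequencies `-k`, `k ∈ S`. -/
lemma sum_norm_sq_fourierEntry_le {n : ℕ} {a : (Fin n → ℝ) × (Fin n → ℝ) → ℂ} (ha : Continuous a)
    (haper : ∀ (x ξ : Fin n → ℝ) (j : Fin n → ℤ), a (x + (fun i => (j i : ℝ)), ξ) = a (x, ξ))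
    {C : ℝ} (hC : 0 ≤ C) (hT : ∀ f : SchwartzMap (Fin n → ℝ) ℂ,
      eLpNorm (pdo n a f) 2 volume ≤ ENNReal.ofReal C * eLpNorm f 2 volume)
    (F S : Finset (Fin n → ℤ)) (g : (Fin n → ℤ) → ℂ) :
    ∑ j ∈ F, ‖∑ k ∈ S, g k * fourierEntry a j k‖ ^ 2 ≤ C ^ 2 * ∑ k ∈ S, ‖g k‖ ^ 2 := by
  set S' : Finset (Fin n → ℤ) := S.map (Equiv.neg (Fin n → ℤ)).toEmbedding with hS'
  have hP : ∀ x, shiftedSum a S' (fun k => g (-k)) x 0 =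
      ∑ k ∈ S, g k * (echar (-fun i => (k i : ℝ)) x * a (x, fun i => -(k i : ℝ))) := by
    intro x
    rw [shiftedSum, hS', Finset.sum_map]
    refine Finset.sum_congr rfl fun k _ => ?_
    have h2 : (fun i => (((-k) i : ℤ) : ℝ)) = -fun i => (k i : ℝ) := by ext; simp
    simp only [Equiv.toEmbedding_apply, Equiv.neg_apply, neg_neg, zero_add]
    rw [h2, mul_assoc]
    rfl
  have hq : ∀ j : Fin n → ℤ, ∑ k ∈ S, g k * fourierEntry a j k =
      ∫ ξ in unitCube (0 : Fin n → ℝ),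
        echar (fun i => (j i : ℝ)) ξ * shiftedSum a S' (fun k => g (-k)) ξ 0 := by
    intro j
    simp only [hP, fourierEntry]
    simp_rw [← integral_const_mul]
    rw [← integral_finsetSum]
    · refine integral_congr_ae (Filter.Eventually.of_forall fun ξ => ?_)
      simp only
      rw [Finset.mul_sum]
      exact Finset.sum_congr rfl fun k _ => by ring
    · intro k _
      exact integrableOn_unitCube (by fun_prop) 0
  have hcont : Continuous fun x => shiftedSum a S' (fun k => g (-k)) x 0 :=
    (continuous_shiftedSum ha S' (fun k => g (-k))).comp
      (f := fun x : Fin n → ℝ => (x, (0 : Fin n → ℝ))) (by fun_prop)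
  rw [← ENNReal.ofReal_le_ofReal_iff (by positivity), ENNReal.ofReal_mul (by positivity),
    ENNReal.ofReal_pow hC, ofReal_sum_norm_sq, ofReal_sum_norm_sq]
  simp_rw [hq]
  refine (ENNReal.sum_le_tsum F).trans ?_
  rw [tsum_enorm_sq_eq_lintegral 0 hcont]
  refine (lintegral_shiftedSum_zero_le ha haper hT S' _).trans_eq ?_
  rw [hS', Finset.sum_map]
  simp

/-- A finite section of a matrix has the same `ℓ²` bound as its conjugate transpose. -/
lemma sum_norm_sq_le_of_adjoint {ι : Type*} (K : ι → ι → ℂ) (F S : Finset ι) {C : ℝ}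
    (hK : ∀ g : ι → ℂ, ∑ j ∈ F, ‖∑ k ∈ S, g k * K j k‖ ^ 2 ≤ C ^ 2 * ∑ k ∈ S, ‖g k‖ ^ 2)
    (f : ι → ℂ) :
    ∑ k ∈ S, ‖∑ j ∈ F, f j * (starRingEnd ℂ) (K j k)‖ ^ 2 ≤ C ^ 2 * ∑ j ∈ F, ‖f j‖ ^ 2 := by
  -- The bound on the adjoint is applied to the image `t` of `f` itself.
  set t : ι → ℂ := fun k => ∑ j ∈ F, f j * (starRingEnd ℂ) (K j k) with ht
  set q : ι → ℂ := fun j => ∑ k ∈ S, t k * K j k with hq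
  have hdual : ((∑ k ∈ S, ‖t k‖ ^ 2 : ℝ) : ℂ) = ∑ j ∈ F, (starRingEnd ℂ) (f j) * q j := by
    simp_rw [hq, Finset.mul_sum]
    rw [Finset.sum_comm, Complex.ofReal_sum]
    refine Finset.sum_congr rfl fun k _ => ?_
    have h1 : (starRingEnd ℂ) (t k) = ∑ j ∈ F, (starRingEnd ℂ) (f j) * K j k := by
      simp [ht]
    rw [Complex.ofReal_pow, ← Complex.mul_conj', h1, Finset.mul_sum]
    exact Finset.sum_congr rfl fun j _ => by ring
  have hbound : ∑ j ∈ F, ‖q j‖ ^ 2 ≤ C ^ 2 * ∑ k ∈ S, ‖t k‖ ^ 2 := hK t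
  change ∑ k ∈ S, ‖t k‖ ^ 2 ≤ _
  set X := ∑ k ∈ S, ‖t k‖ ^ 2 with hX
  have hX0 : 0 ≤ X := by positivity
  have h1 : X ≤ ∑ j ∈ F, ‖f j‖ * ‖q j‖ := by
    calc X = ‖((X : ℝ) : ℂ)‖ := by rw [Complex.norm_real, Real.norm_of_nonneg hX0]
      _ ≤ ∑ j ∈ F, ‖(starRingEnd ℂ) (f j) * q j‖ := by rw [hdual]; exact norm_sum_le _ _
      _ = _ := by simp
  have h2 : X ^ 2 ≤ (∑ j ∈ F, ‖f j‖ ^ 2) * (C ^ 2 * X) :=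
    calc X ^ 2 ≤ (∑ j ∈ F, ‖f j‖ * ‖q j‖) ^ 2 := by gcongr
      _ ≤ (∑ j ∈ F, ‖f j‖ ^ 2) * ∑ j ∈ F, ‖q j‖ ^ 2 := Finset.sum_mul_sq_le_sq_mul_sq _ _ _
      _ ≤ _ := by gcongr
  rcases hX0.eq_or_lt with h0 | h0
  · rw [← h0]; positivity
  · exact le_of_mul_le_mul_right (by linarith) h0

/-- If `a : ℝⁿ × ℝⁿ → ℂ` is continuous, bounded, `ℤⁿ`-periodic in its first variable, and the
pseudo-differential operator `T` with symbol `a` is bounded on `L²(ℝⁿ)`, then the discrete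
pseudo-differential operator `t_m` with symbol `m(k,ξ) = conj (a(ξ,-k))` is bounded on
`ℓ²(ℤⁿ)`. -/
theorem discrete_boundedness_of_euclidean_boundedness (n : ℕ) (hn : 1 ≤ n)
    (a : (Fin n → ℝ) × (Fin n → ℝ) → ℂ) (ha : Continuous a)
    (habdd : ∃ B : ℝ, ∀ p, ‖a p‖ ≤ B)
    (haper : ∀ (x ξ : Fin n → ℝ) (j : Fin n → ℤ), a (x + (fun i => (j i : ℝ)), ξ) = a (x, ξ))
    (C : ℝ) (hC : 0 ≤ C)
    (hT : ∀ f : SchwartzMap (Fin n → ℝ) ℂ,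
      eLpNorm (pdo n a f) 2 volume ≤ ENNReal.ofReal C * eLpNorm f 2 volume) :
    ∃ C' : ℝ, 0 ≤ C' ∧ ∀ f : (Fin n → ℤ) → ℂ, (Function.support f).Finite →
      l2Norm (discretePdo n
        (fun k ξ => (starRingEnd ℂ) (a (ξ, fun i => -(k i : ℝ)))) f) ≤
      ENNReal.ofReal C' * l2Norm f := by
  refine ⟨C, hC, fun f hf => ?_⟩
  set t := discretePdo n (fun k ξ => (starRingEnd ℂ) (a (ξ, fun i => -(k i : ℝ)))) f with ht
  have hsum : ∑' k, (‖t k‖₊ : ℝ≥0∞) ^ 2 ≤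
      ENNReal.ofReal C ^ 2 * ∑' j, (‖f j‖₊ : ℝ≥0∞) ^ 2 := by
    rw [ENNReal.tsum_eq_iSup_sum]
    refine iSup_le fun S => ?_
    have h1 := ENNReal.ofReal_le_ofReal (sum_norm_sq_le_of_adjoint (fourierEntry a) hf.toFinset S
      (sum_norm_sq_fourierEntry_le ha haper hC hT hf.toFinset S) f)
    simp_rw [← discretePdo_eq_sum ha hf, ← ht] at h1
    rw [ENNReal.ofReal_mul (by positivity), ENNReal.ofReal_pow hC, ofReal_sum_norm_sq,
      ofReal_sum_norm_sq] at h1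
    refine h1.trans ?_
    gcongr
    exact ENNReal.sum_le_tsum hf.toFinset
  calc l2Norm t ≤ (ENNReal.ofReal C ^ 2 * ∑' j, (‖f j‖₊ : ℝ≥0∞) ^ 2) ^ (1 / 2 : ℝ) :=
        ENNReal.rpow_le_rpow hsum (by norm_num)
    _ = ENNReal.ofReal C * l2Norm f := by
        rw [ENNReal.mul_rpow_of_nonneg _ _ (by norm_num), l2Norm, ← ENNReal.rpow_natCast,
          ← ENNReal.rpow_mul]
        norm_num
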